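/- For the noiseless closed-loop Markov jump linear system with one time-step delayed mode observations, the stacked first moments evolve linearly: vec²(m^{(k+1)}) = Ψ · vec²(m^{(k)}) for all k ≥ 0, where m^{(k)} = [m_{ℓi}^{(k)}]_{ℓ,i=1}^N and Ψ is the matrix representing, in the vec² coordinates, the linear map sending [m_{ℓi}] to the block array whose (i,j) block is (A Σ_ℓ m_{ℓi} + ν̂_i B Σ_ℓ K_ℓ m_{ℓi}) p_{ij}. -/

import Mathlib

/-!
Conditioning on the current mode `θ_k = i` makes `(θ_{k+1}, ν_k)` independent of the past, and
`x_k 1_{θ_{k-1} = ℓ}` is a function of the past alone. Splitting `m_{ij}^{(k+1)}` according to the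
values `b` of `ν_k` and `ℓ` of `θ_{k-1}`, the update matrix is the constant `A + b B K_ℓ` on each
piece, and the integral of `x_k` over the piece is `p_{ij} Pr(ν_k = b ∣ θ_k = i) m_{ℓi}^{(k)}`.
Summing over `b` and `ℓ` gives the `(i, j)` block of the asserted linear map.

The passage from probabilities of past events to integrals of past-measurable functions
(`setIntegral_of_measure_inter`) holds because the two restricted measures agree, up to the factor,
on the past `σ`-algebra. Integrability holds because each `x_k` takes finitely many values.
-/


open MeasureTheory Matrix ProbabilityTheory Filter
open scoped BigOperators ComplexOrder

noncomputable section

/-- The canonical ring homomorphism from an `RCLike` field (`ℝ` or `ℂ`) to `ℂ`. -/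
def rcToComplex (𝕜 : Type*) [RCLike 𝕜] : 𝕜 →+* ℂ where
  toFun z := ⟨RCLike.re z, RCLike.im z⟩
  map_one' := by simp [Complex.ext_iff]
  map_mul' z w := by simp [Complex.ext_iff, RCLike.mul_re, RCLike.mul_im]
  map_zero' := by simp [Complex.ext_iff]
  map_add' z w := by simp [Complex.ext_iff]

/-- Spectral radius of a complex square matrix: the largest absolute value of its
(complex) eigenvalues. -/
def specRad {n : Type*} [Fintype n] [DecidableEq n] (M : Matrix n n ℂ) : ℝ :=
  sSup ((fun z => ‖z‖) '' spectrum ℂ M)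

/-- Spectral radius of a square matrix over `ℝ` or `ℂ`, computed over `ℂ`. -/
def specRadK {𝕜 : Type*} [RCLike 𝕜] {n : Type*} [Fintype n] [DecidableEq n]
    (M : Matrix n n 𝕜) : ℝ :=
  specRad (M.map (rcToComplex 𝕜))

variable {𝕜 : Type*} [RCLike 𝕜]

/-- `vec²` of an `N × N` array of `n_x × n_x` blocks `S = [S_{ℓi}]` (block `S ℓ i` sits in
block-row `ℓ` and block-column `i`): the index `((i, ℓ), (c, r))` addresses the entry in row `r`
and column `c` of the block `S_{ℓ i}`, corresponding to the stacking
`vec(S₁₁),…,vec(S_{N1}), vec(S₁₂),…,vec(S_{NN})` with column-major `vec`. -/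
def vec2 {N nx : ℕ} (S : Fin N → Fin N → Matrix (Fin nx) (Fin nx) 𝕜) :
    (Fin N × Fin N) × Fin nx × Fin nx → 𝕜 :=
  fun q => S q.1.2 q.1.1 q.2.2 q.2.1

/-- `vec²` of an `N × N` array of vectors in `𝕜^{n_x}`. -/
def vec2v {N nx : ℕ} (m : Fin N → Fin N → (Fin nx → 𝕜)) :
    (Fin N × Fin N) × Fin nx → 𝕜 :=
  fun q => m q.1.2 q.1.1 q.2

/-- The operator `L`, blockwise: `L_{ij}(S)`. -/
def Lop {N nx nu : ℕ} (A : Matrix (Fin nx) (Fin nx) 𝕜) (B : Matrix (Fin nx) (Fin nu) 𝕜)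
    (K : Fin N → Matrix (Fin nu) (Fin nx) 𝕜) (p : Fin N → Fin N → ℝ) (νh : Fin N → ℝ)
    (S : Fin N → Fin N → Matrix (Fin nx) (Fin nx) 𝕜) (i j : Fin N) :
    Matrix (Fin nx) (Fin nx) 𝕜 :=
  ((p i j : ℝ) : 𝕜) •
    (A * (∑ ℓ, S ℓ i) * Aᴴ
      + ((νh i : ℝ) : 𝕜) • (B * (∑ ℓ, K ℓ * S ℓ i * (K ℓ)ᴴ) * Bᴴ)
      + ((νh i : ℝ) : 𝕜) • (A * (∑ ℓ, S ℓ i * (K ℓ)ᴴ) * Bᴴ)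
      + ((νh i : ℝ) : 𝕜) • (B * (∑ ℓ, K ℓ * S ℓ i) * Aᴴ))

/-- The operator `T`, blockwise: `T_{ℓi}(S)`. -/
def Tadj {N nx nu : ℕ} (A : Matrix (Fin nx) (Fin nx) 𝕜) (B : Matrix (Fin nx) (Fin nu) 𝕜)
    (K : Fin N → Matrix (Fin nu) (Fin nx) 𝕜) (p : Fin N → Fin N → ℝ) (νh : Fin N → ℝ)
    (S : Fin N → Fin N → Matrix (Fin nx) (Fin nx) 𝕜) (ℓ i : Fin N) :
    Matrix (Fin nx) (Fin nx) 𝕜 :=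
  Aᴴ * (∑ j, ((p i j : ℝ) : 𝕜) • S i j) * A
    + ((νh i : ℝ) : 𝕜) • ((K ℓ)ᴴ * Bᴴ * (∑ j, ((p i j : ℝ) : 𝕜) • S i j) * (B * K ℓ))
    + ((νh i : ℝ) : 𝕜) • ((K ℓ)ᴴ * Bᴴ * (∑ j, ((p i j : ℝ) : 𝕜) • S i j) * A)
    + ((νh i : ℝ) : 𝕜) • (Aᴴ * (∑ j, ((p i j : ℝ) : 𝕜) • S i j) * (B * K ℓ))

/-- σ-algebra of the "past" at time `k`: generated by `θ_{-1},…,θ_{k-1}` and `ν_0,…,ν_{k-1}`. -/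
def pastSig {Ω : Type*} {N : ℕ} (θ : ℤ → Ω → Fin N) (ν : ℕ → Ω → Bool) (k : ℕ) :
    MeasurableSpace Ω :=
  (⨆ t : ℤ, ⨆ (_ : -1 ≤ t), ⨆ (_ : t < (k : ℤ)), MeasurableSpace.comap (θ t) ⊤) ⊔
    ⨆ t : ℕ, ⨆ (_ : t < k), MeasurableSpace.comap (ν t) ⊤

/-- σ-algebra generated by `θ_{-1},…,θ_{k-1}`. -/
def pastTheta {Ω : Type*} {N : ℕ} (θ : ℤ → Ω → Fin N) (k : ℤ) : MeasurableSpace Ω :=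
  ⨆ t : ℤ, ⨆ (_ : -1 ≤ t), ⨆ (_ : t < k), MeasurableSpace.comap (θ t) ⊤

/-- σ-algebra generated by the pairs `(θ_t, θ_{t-1})` for `0 ≤ t ≤ k-1`. -/
def pastPair {Ω : Type*} {N : ℕ} (θ : ℤ → Ω → Fin N) (k : ℕ) : MeasurableSpace Ω :=
  ⨆ t : ℕ, ⨆ (_ : t < k),
    MeasurableSpace.comap (fun ω => (θ (t : ℤ) ω, θ ((t : ℤ) - 1) ω)) ⊤

/-- Indicator-weighted first moment `m_{ℓi}^{(k)} = E[x_k 1_{θ_k = i, θ_{k-1} = ℓ}]`. -/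
def mMom {Ω : Type*} [MeasurableSpace Ω] (μ : Measure Ω) {N nx : ℕ}
    (θ : ℤ → Ω → Fin N) (x : ℕ → Ω → Fin nx → 𝕜) (k : ℕ) (ℓ i : Fin N) : Fin nx → 𝕜 :=
  fun r => ∫ ω in {ω | θ (k : ℤ) ω = i ∧ θ ((k : ℤ) - 1) ω = ℓ}, x k ω r ∂μ

/-- Indicator-weighted second moment `M_{ℓi}^{(k)} = E[x_k x_k^* 1_{θ_k = i, θ_{k-1} = ℓ}]`. -/
def MMom {Ω : Type*} [MeasurableSpace Ω] (μ : Measure Ω) {N nx : ℕ}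
    (θ : ℤ → Ω → Fin N) (x : ℕ → Ω → Fin nx → 𝕜) (k : ℕ) (ℓ i : Fin N) :
    Matrix (Fin nx) (Fin nx) 𝕜 :=
  Matrix.of fun r c =>
    ∫ ω in {ω | θ (k : ℤ) ω = i ∧ θ ((k : ℤ) - 1) ω = ℓ}, x k ω r * star (x k ω c) ∂μ

/-- Joint probability `π_{ℓi}^{(k)} = Pr(θ_k = i, θ_{k-1} = ℓ)`. -/
def piP {Ω : Type*} [MeasurableSpace Ω] (μ : Measure Ω) {N : ℕ}
    (θ : ℤ → Ω → Fin N) (k : ℕ) (ℓ i : Fin N) : ℝ :=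
  (μ {ω | θ (k : ℤ) ω = i ∧ θ ((k : ℤ) - 1) ω = ℓ}).toReal

/-- A measure on a real vector space is Gaussian if every real-linear functional pushes it
forward to a one-dimensional Gaussian law. -/
def IsGaussianLaw {E : Type*} [AddCommGroup E] [Module ℝ E] [MeasurableSpace E]
    (γ : Measure E) : Prop :=
  ∀ L : E →ₗ[ℝ] ℝ, ∃ (m : ℝ) (v : NNReal), γ.map L = ProbabilityTheory.gaussianReal m v

/-- If `μ (F ∩ ·) = c μ (G ∩ ·)` on a sub-`σ`-algebra, then `∫_F f = c ∫_G f` for every function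
measurable with respect to it. -/
lemma setIntegral_of_measure_inter {𝕜 Ω : Type*} [RCLike 𝕜] {m m0 : MeasurableSpace Ω}
    (hm : m ≤ m0) (μ : Measure Ω) [IsFiniteMeasure μ] (F G : Set Ω) (c : ℝ) (hc : 0 ≤ c)
    (h : ∀ E, MeasurableSet[m] E → (μ (F ∩ E)).toReal = c * (μ (G ∩ E)).toReal)
    (f : Ω → 𝕜) (hf : StronglyMeasurable[m] f) :
    ∫ ω in F, f ω ∂μ = (c : 𝕜) * ∫ ω in G, f ω ∂μ := by
  have key : (μ.restrict F).trim hm = ENNReal.ofReal c • (μ.restrict G).trim hm := by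
    refine @Measure.ext _ m _ _ fun E hE => ?_
    rw [Measure.smul_apply, trim_measurableSet_eq hm hE, trim_measurableSet_eq hm hE,
      Measure.restrict_apply (hm E hE), Measure.restrict_apply (hm E hE), Set.inter_comm E F,
      Set.inter_comm E G, smul_eq_mul]
    rw [← ENNReal.toReal_eq_toReal_iff' (measure_ne_top _ _)
      (ENNReal.mul_ne_top ENNReal.ofReal_ne_top (measure_ne_top _ _)), h E hE,
      ENNReal.toReal_mul, ENNReal.toReal_ofReal hc]
  rw [integral_trim hm hf, integral_trim hm hf, key, integral_smul_measure,
    ENNReal.toReal_ofReal hc, RCLike.real_smul_eq_coe_mul]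

lemma pastSig_le {Ω : Type*} [m0 : MeasurableSpace Ω] {N : ℕ} (θ : ℤ → Ω → Fin N)
    (ν : ℕ → Ω → Bool) (hθ : ∀ t, Measurable (θ t)) (hν : ∀ t, Measurable (ν t)) (k : ℕ) :
    pastSig θ ν k ≤ m0 := by
  refine sup_le (iSup_le fun t => iSup_le fun _ => iSup_le fun _ => ?_)
    (iSup_le fun t => iSup_le fun _ => ?_)
  · exact (hθ t).comap_le
  · exact (hν t).comap_le

lemma pastSig_mono {Ω : Type*} {N : ℕ} (θ : ℤ → Ω → Fin N) (ν : ℕ → Ω → Bool) (k : ℕ) :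
    pastSig θ ν k ≤ pastSig θ ν (k + 1) := by
  refine sup_le_sup (iSup_mono fun t => iSup_mono fun _ => ?_) (iSup_mono fun t => ?_)
  · exact iSup_le fun h => le_iSup_of_le (by push_cast; omega) le_rfl
  · exact iSup_le fun h => le_iSup_of_le (by omega) le_rfl

lemma measurable_theta_pastSig {Ω : Type*} {N : ℕ} (θ : ℤ → Ω → Fin N) (ν : ℕ → Ω → Bool) (k : ℕ)
    (t : ℤ) (h1 : -1 ≤ t) (h2 : t < k) : Measurable[pastSig θ ν k] (θ t) :=
  measurable_iff_comap_le.2 <| le_sup_of_le_left <|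
    le_iSup_of_le t <| le_iSup_of_le h1 <| le_iSup_of_le h2 le_rfl

lemma measurable_nu_pastSig {Ω : Type*} {N : ℕ} (θ : ℤ → Ω → Fin N) (ν : ℕ → Ω → Bool) (k t : ℕ)
    (h : t < k) : Measurable[pastSig θ ν k] (ν t) :=
  measurable_iff_comap_le.2 <| le_sup_of_le_right <| le_iSup_of_le t <| le_iSup_of_le h le_rfl

/-- A state driven by a matrix depending on `(ν_k, θ_{k-1})` is measurable with respect to the
past. -/
lemma measurable_state {𝕜 Ω : Type*} [RCLike 𝕜] {N nx : ℕ} (θ : ℤ → Ω → Fin N)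
    (ν : ℕ → Ω → Bool) (x0 : Fin nx → 𝕜) (x : ℕ → Ω → Fin nx → 𝕜)
    (M : Bool → Fin N → Matrix (Fin nx) (Fin nx) 𝕜) (hx0 : ∀ ω, x 0 ω = x0)
    (hx : ∀ k ω, x (k + 1) ω = M (ν k ω) (θ ((k : ℤ) - 1) ω) *ᵥ x k ω) (k : ℕ) (r : Fin nx) :
    Measurable[pastSig θ ν k] (fun ω => x k ω r) := by
  induction k generalizing r with
  | zero => simp only [hx0]; exact measurable_const
  | succ k ih =>
    simp only [hx, Matrix.mulVec, dotProduct]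
    letI := pastSig θ ν (k + 1)
    refine Finset.measurable_sum _ fun c _ => Measurable.mul ?_ ?_
    · have h1 := measurable_nu_pastSig θ ν (k + 1) k (by omega)
      have h2 := measurable_theta_pastSig θ ν (k + 1) ((k : ℤ) - 1) (by omega)
        (by push_cast; omega)
      exact (measurable_of_finite (fun q : Bool × Fin N => M q.1 q.2 r c)).comp (h1.prodMk h2)
    · exact (ih c).mono (pastSig_mono θ ν k) le_rfl

lemma finite_range_state {𝕜 Ω : Type*} [RCLike 𝕜] {N nx : ℕ} (θ : ℤ → Ω → Fin N)
    (ν : ℕ → Ω → Bool) (x0 : Fin nx → 𝕜) (x : ℕ → Ω → Fin nx → 𝕜)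
    (M : Bool → Fin N → Matrix (Fin nx) (Fin nx) 𝕜) (hx0 : ∀ ω, x 0 ω = x0)
    (hx : ∀ k ω, x (k + 1) ω = M (ν k ω) (θ ((k : ℤ) - 1) ω) *ᵥ x k ω) (k : ℕ) :
    (Set.range (x k)).Finite := by
  induction k with
  | zero =>
    refine (Set.finite_singleton x0).subset ?_
    rintro _ ⟨ω, rfl⟩
    exact hx0 ω
  | succ k ih =>
    refine (((Set.finite_univ (α := Bool × Fin N)).prod ih).image
      (fun q => M q.1.1 q.1.2 *ᵥ q.2)).subset ?_
    rintro _ ⟨ω, rfl⟩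
    exact ⟨((ν k ω, θ ((k : ℤ) - 1) ω), x k ω), by simp, (hx k ω).symm⟩

lemma integrable_state {𝕜 Ω : Type*} [RCLike 𝕜] [MeasurableSpace Ω] (μ : Measure Ω)
    [IsFiniteMeasure μ] {nx : ℕ} (y : Ω → Fin nx → 𝕜) (hy : (Set.range y).Finite) (r : Fin nx)
    (hm : Measurable (fun ω => y ω r)) : Integrable (fun ω => y ω r) μ := by
  obtain ⟨C, hC⟩ := (hy.image (fun v => ‖v r‖)).bddAbove
  exact Integrable.of_bound hm.aestronglyMeasurable C
    (Eventually.of_forall fun ω => hC ⟨y ω, ⟨ω, rfl⟩, rfl⟩)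

/-- The stacked first moments evolve linearly:
`vec²(m^{(k+1)}) = Ψ vec²(m^{(k)})`. -/
theorem firstMoment_linear_evolution
    {𝕜 : Type*} [RCLike 𝕜]
    {N nx nu : ℕ} (hN : 1 ≤ N) (hnx : 1 ≤ nx) (hnu : 1 ≤ nu)
    (A : Matrix (Fin nx) (Fin nx) 𝕜) (B : Matrix (Fin nx) (Fin nu) 𝕜)
    (K : Fin N → Matrix (Fin nu) (Fin nx) 𝕜)
    (p : Fin N → Fin N → ℝ) (hp_nonneg : ∀ i j, 0 ≤ p i j) (hp_row : ∀ i, ∑ j, p i j = 1)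
    (νh : Fin N → ℝ) (hνh : ∀ i, νh i ∈ Set.Icc (0 : ℝ) 1)
    {Ω : Type*} [MeasurableSpace Ω] (μ : Measure Ω) [IsProbabilityMeasure μ]
    (θ : ℤ → Ω → Fin N) (hθ : ∀ t, Measurable (θ t))
    (ν : ℕ → Ω → Bool) (hν : ∀ t, Measurable (ν t))
    (hMarkov : ∀ (k : ℕ) (i j : Fin N) (b : Bool) (E : Set Ω),
      MeasurableSet[pastSig θ ν k] E →
      (μ ({ω | θ ((k : ℤ) + 1) ω = j ∧ ν k ω = b ∧ θ (k : ℤ) ω = i} ∩ E)).toReal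
        = p i j * (if b then νh i else 1 - νh i) *
            (μ ({ω | θ (k : ℤ) ω = i} ∩ E)).toReal)
    (x0 : Fin nx → 𝕜) (x : ℕ → Ω → Fin nx → 𝕜)
    (hx0 : ∀ ω, x 0 ω = x0)
    (hxrec : ∀ (k : ℕ) (ω : Ω),
      x (k + 1) ω
        = Matrix.mulVec (A + (if ν k ω then (1 : 𝕜) else 0) • (B * K (θ ((k : ℤ) - 1) ω)))
            (x k ω))
    (Ψ : Matrix ((Fin N × Fin N) × Fin nx) ((Fin N × Fin N) × Fin nx) 𝕜)
    (hΨ : ∀ m : Fin N → Fin N → (Fin nx → 𝕜),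
      vec2v (fun i j => ((p i j : ℝ) : 𝕜) •
          (Matrix.mulVec A (∑ ℓ, m ℓ i)
            + ((νh i : ℝ) : 𝕜) • Matrix.mulVec B (∑ ℓ, Matrix.mulVec (K ℓ) (m ℓ i))))
        = Matrix.mulVec Ψ (vec2v m)) :
    ∀ k : ℕ,
      vec2v (fun ℓ i => mMom μ θ x (k + 1) ℓ i)
        = Matrix.mulVec Ψ (vec2v (fun ℓ i => mMom μ θ x k ℓ i)) := by
  intro k
  rw [← hΨ]
  let M : Bool → Fin N → Matrix (Fin nx) (Fin nx) 𝕜 :=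
    fun b ℓ => A + (if b then (1 : 𝕜) else 0) • (B * K ℓ)
  have hle := pastSig_le θ ν hθ hν k
  have hmeas := measurable_state θ ν x0 x M hx0 hxrec k
  have hint : ∀ r, Integrable (fun ω => x k ω r) μ := fun r =>
    integrable_state μ (x k) (finite_range_state θ ν x0 x M hx0 hxrec k) r
      ((hmeas r).mono hle le_rfl)
  funext ⟨⟨j, i⟩, r⟩
  simp only [vec2v]
  let S : Bool × Fin N → Set Ω := fun q =>
    {ω | θ ((k : ℤ) + 1) ω = j ∧ ν k ω = q.1 ∧ θ (k : ℤ) ω = i} ∩ {ω | θ ((k : ℤ) - 1) ω = q.2}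
  have hSm : ∀ q, MeasurableSet (S q) := fun q =>
    ((hθ _ (measurableSet_singleton j)).inter
      ((hν _ (measurableSet_singleton q.1)).inter (hθ _ (measurableSet_singleton i)))).inter
      (hθ _ (measurableSet_singleton q.2))
  have hSd : Pairwise (Function.onFun Disjoint S) := by
    intro q q' hqq
    refine Set.disjoint_left.2 fun ω h h' => hqq ?_
    exact Prod.ext (h.1.2.1.symm.trans h'.1.2.1) (h.2.symm.trans h'.2)
  have hSU : {ω | θ (((k + 1 : ℕ) : ℤ)) ω = j ∧ θ (((k + 1 : ℕ) : ℤ) - 1) ω = i} = ⋃ q, S q := by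
    ext ω
    simp [S]
  -- `S q` is the joint event of the Markov hypothesis cut by the past event `θ_{k-1} = q.2`.
  have hpiece : ∀ q : Bool × Fin N, ∀ c, ∫ ω in S q, x k ω c ∂μ
      = ((p i j * (if q.1 then νh i else 1 - νh i) : ℝ) : 𝕜) * mMom μ θ x k q.2 i c := by
    intro q c
    have hE : MeasurableSet[pastSig θ ν k] {ω | θ ((k : ℤ) - 1) ω = q.2} :=
      measurable_theta_pastSig θ ν k ((k : ℤ) - 1) (by omega) (by omega)
        (measurableSet_singleton q.2)
    have hnn : 0 ≤ p i j * (if q.1 then νh i else 1 - νh i) := by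
      refine mul_nonneg (hp_nonneg i j) ?_
      have := hνh i
      split_ifs
      · exact this.1
      · linarith [this.2]
    refine setIntegral_of_measure_inter hle μ (S q) _ _ hnn (fun E' hE' => ?_) _
      (hmeas c).stronglyMeasurable
    have := hMarkov k i j q.1 _ (MeasurableSet.inter hE hE')
    rw [← Set.inter_assoc, ← Set.inter_assoc] at this
    exact this
  -- On each piece the transition matrix is constant, and only `x_k` remains under the integral.
  have hstep : ∀ q : Bool × Fin N, ∫ ω in S q, x (k + 1) ω r ∂μ
      = ∑ c, M q.1 q.2 r c * ∫ ω in S q, x k ω c ∂μ := by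
    intro q
    rw [setIntegral_congr_fun (g := fun ω => ∑ c, M q.1 q.2 r c * x k ω c) (hSm q)]
    · rw [integral_finsetSum _ fun c _ => ((hint c).integrableOn).const_mul _]
      simp only [integral_const_mul]
    · intro ω hω
      have h1 : ν k ω = q.1 := hω.1.2.1
      have h2 : θ ((k : ℤ) - 1) ω = q.2 := hω.2
      simp only [hxrec, h1, h2]
      rfl
  have hintS : ∀ q, IntegrableOn (fun ω => x (k + 1) ω r) (S q) μ := fun q =>
    (integrable_state μ (x (k + 1)) (finite_range_state θ ν x0 x M hx0 hxrec (k + 1)) r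
      ((measurable_state θ ν x0 x M hx0 hxrec (k + 1) r).mono
        (pastSig_le θ ν hθ hν (k + 1)) le_rfl)).integrableOn
  have hL : mMom μ θ x (k + 1) i j r = ∑ q : Bool × Fin N, ∑ c, M q.1 q.2 r c *
      (((p i j * (if q.1 then νh i else 1 - νh i) : ℝ) : 𝕜) * mMom μ θ x k q.2 i c) := by
    rw [mMom, hSU, integral_iUnion_fintype hSm hSd hintS]
    simp only [hstep, hpiece]
  -- Per mode `ℓ`: averaging `A + b B K_ℓ` over `b` leaves `A + ν̂_i B K_ℓ`.
  have hR : ∀ ℓ, ∑ b : Bool, ∑ c, M b ℓ r c *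
      (((p i j * (if b then νh i else 1 - νh i) : ℝ) : 𝕜) * mMom μ θ x k ℓ i c)
      = (p i j : 𝕜) * ((A *ᵥ mMom μ θ x k ℓ i) r
        + (νh i : 𝕜) * (B *ᵥ (K ℓ *ᵥ mMom μ θ x k ℓ i)) r) := by
    intro ℓ
    rw [Matrix.mulVec_mulVec]
    simp only [Fintype.sum_bool, M, Matrix.mulVec, dotProduct]
    rw [Finset.mul_sum, ← Finset.sum_add_distrib, ← Finset.sum_add_distrib, Finset.mul_sum]
    refine Finset.sum_congr rfl fun c _ => ?_
    simp
    ring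
  rw [hL, Fintype.sum_prod_type, Finset.sum_comm]
  simp only [hR]
  simp only [Matrix.mulVec_sum, Pi.smul_apply, Pi.add_apply, Finset.sum_apply, smul_eq_mul]
  rw [← Finset.mul_sum, Finset.sum_add_distrib, Finset.mul_sum _ _ (νh i : 𝕜)]
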